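/- arXiv:1108.2977 — 3 statements merged into one kernel-verified Lean document; each statement's English description precedes it below -/
import Mathlib

section
/- Let m ≥ 1 be an integer. For every θ = (θ₁,…,θ_m) ∈ ℝ^m, the following identity of complex numbers holds: A_δ(θ) · ∏_{j=1}^m (2cos θ_j) = ( A_{δ+λ⁺}(θ) + A_{δ+λ⁻}(θ) ) + Σ_{j=1}^{⌊m/2⌋} (−1)^j · N(2j, j) · A_{δ+ω_{m−2j}}(θ), where λ⁺ = (1,1,…,1) and λ⁻ = (1,…,1,−1). (This is the k = m case of the expansion of the elementary symmetric function S_{m,m} of the 2cos θ_j into irreducible characters of SO(2m), multiplied through by the Weyl denominator A_δ.) -/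
open scoped BigOperators

/-- The alternating sum `A_λ(θ) = Σ_{w ∈ W_m} sgn(w) exp(i Σ_j (w·λ)_j θ_j)`, where
`W_m` consists of pairs `(σ, ε)` with `σ` a permutation of `{1,…,m}` and
`ε ∈ {±1}^m` with `∏ ε_j = 1`, and `(w·λ)_j = ε_j λ_{σ⁻¹(j)}`. -/
noncomputable def Avec (m : ℕ) (lam : Fin m → ℤ) (θ : Fin m → ℝ) : ℂ :=
  ∑ σ : Equiv.Perm (Fin m),
    ∑ ε ∈ Finset.univ.filter (fun ε : Fin m → ℤˣ => (∏ j, (ε j : ℤ)) = 1),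
      ((Equiv.Perm.sign σ : ℤ) : ℂ) *
        Complex.exp (Complex.I *
          ∑ j : Fin m, (((ε j : ℤ) * lam (σ⁻¹ j) : ℤ) : ℂ) * ((θ j : ℝ) : ℂ))

/-- `δ = (m-1, m-2, …, 1, 0)`. -/
def deltaVec (m : ℕ) : Fin m → ℤ := fun j => (m : ℤ) - 1 - (j : ℤ)

/-- `ω_q`: first `q` entries equal to `1`, the rest `0`. -/
def omegaVec (m q : ℕ) : Fin m → ℤ := fun j => if (j : ℕ) < q then 1 else 0

/-- `N₀(n,k)`: the number of `k`-tuples `(j₁,…,j_k)` of integers with `1 ≤ j₁`,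
`j_{i+1} ≥ j_i + 2`, and `j_k ≤ n − 1`. -/
noncomputable def N0 (n k : ℕ) : ℕ :=
  Nat.card {t : Fin k → ℤ //
    (∀ h : 0 < k, 1 ≤ t ⟨0, h⟩) ∧
    (∀ i : ℕ, ∀ h : i + 1 < k, t ⟨i, by omega⟩ + 2 ≤ t ⟨i + 1, h⟩) ∧
    (∀ h : 0 < k, t ⟨k - 1, by omega⟩ ≤ (n : ℤ) - 1)}

/-- `N(n,0) = 1` and `N(n,k) = N₀(n,k) + N₀(n−2,k−1)` for `k ≥ 1`. -/
noncomputable def Nfun (n k : ℕ) : ℕ := if k = 0 then 1 else N0 n k + N0 (n - 2) (k - 1)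


lemma N0_diag (k : ℕ) : N0 (2 * k) k = 1 := by
  unfold N0
  rw [Nat.card_eq_one_iff_unique]
  constructor
  · constructor
    have key : ∀ t : Fin k → ℤ, ((∀ h : 0 < k, 1 ≤ t ⟨0, h⟩) ∧
      (∀ i : ℕ, ∀ h : i + 1 < k, t ⟨i, by omega⟩ + 2 ≤ t ⟨i + 1, h⟩) ∧
      (∀ h : 0 < k, t ⟨k - 1, by omega⟩ ≤ ((2 * k : ℕ) : ℤ) - 1)) →
        ∀ (i : ℕ) (h : i < k), t ⟨i, h⟩ = 2 * i + 1 := by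
      rintro t ⟨h1, h2, h3⟩
      have lo : ∀ (i : ℕ) (h : i < k), 2 * (i : ℤ) + 1 ≤ t ⟨i, h⟩ := by
        intro i
        induction i with
        | zero => intro h; simpa using h1 h
        | succ i ih =>
          intro h
          have := ih (by omega)
          have := h2 i h
          push_cast
          omega
      have hi : ∀ (d i : ℕ) (h : i < k), i + d = k - 1 → t ⟨i, h⟩ ≤ 2 * (i : ℤ) + 1 := by
        intro d
        induction d with
        | zero =>
          intro i h hd
          have h4 := h3 (by omega)
          have : i = k - 1 := by omega
          subst this
          push_cast at h4
          omega
        | succ d ih =>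
          intro i h hd
          have := ih (i + 1) (by omega) (by omega)
          have := h2 i (by omega)
          push_cast at *
          omega
      intro i h
      exact le_antisymm (hi (k - 1 - i) i h (by omega)) (lo i h)
    rintro ⟨s, hs⟩ ⟨t, ht⟩
    apply Subtype.ext
    funext ⟨i, h⟩
    exact (key s hs i h).trans (key t ht i h).symm
  · refine ⟨⟨fun i => 2 * (i : ℕ) + 1, ?_, ?_, ?_⟩⟩
    · intro h; simp
    · intro i h; push_cast; omega
    · intro h; simp only []; omega

lemma Nfun_diag (j : ℕ) (hj : 1 ≤ j) : Nfun (2 * j) j = 2 := by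
  unfold Nfun
  rw [if_neg (by omega), show 2 * j - 2 = 2 * (j - 1) by omega, N0_diag, N0_diag]

/-- `2 cos (l θ_j)` in exponential form. -/
noncomputable def ccos {m : ℕ} (θ : Fin m → ℝ) (l : ℤ) (j : Fin m) : ℂ :=
  Complex.exp (Complex.I * ((l : ℂ) * ((θ j : ℝ) : ℂ))) +
    Complex.exp (Complex.I * (((-l : ℤ) : ℂ) * ((θ j : ℝ) : ℂ)))

noncomputable def Ddet (m : ℕ) (lam : Fin m → ℤ) (θ : Fin m → ℝ) : ℂ :=
  Matrix.det (Matrix.of fun i j => ccos θ (lam i) j)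

lemma Avec_add (m : ℕ) (lam mu : Fin m → ℤ) (θ : Fin m → ℝ) (l : Fin m)
    (hl : mu l = - lam l) (hne : ∀ i, i ≠ l → mu i = lam i) :
    Avec m lam θ + Avec m mu θ = Ddet m lam θ := by
  unfold Ddet
  rw [Matrix.det_apply']
  rw [← Equiv.sum_comp (Equiv.inv (Equiv.Perm (Fin m)))]
  unfold Avec
  rw [← Finset.sum_add_distrib]
  refine Finset.sum_congr rfl fun σ _ => ?_
  have hflip : (∑ ε ∈ Finset.univ.filter (fun ε : Fin m → ℤˣ => (∏ j, (ε j : ℤ)) = 1),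
      ((Equiv.Perm.sign σ : ℤ) : ℂ) *
        Complex.exp (Complex.I *
          ∑ j : Fin m, (((ε j : ℤ) * mu (σ⁻¹ j) : ℤ) : ℂ) * ((θ j : ℝ) : ℂ))) =
      ∑ ε ∈ Finset.univ.filter (fun ε : Fin m → ℤˣ => ¬ (∏ j, (ε j : ℤ)) = 1),
      ((Equiv.Perm.sign σ : ℤ) : ℂ) *
        Complex.exp (Complex.I *
          ∑ j : Fin m, (((ε j : ℤ) * lam (σ⁻¹ j) : ℤ) : ℂ) * ((θ j : ℝ) : ℂ)) := by
    have hinv : ∀ ε : Fin m → ℤˣ,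
        ε * Pi.mulSingle (σ l) (-1) * Pi.mulSingle (σ l) (-1) = ε := by
      intro ε
      rw [mul_assoc, ← Pi.mulSingle_mul]
      simp
    have hprod : ∀ ε : Fin m → ℤˣ,
        (∏ j, (((ε * Pi.mulSingle (σ l) (-1) : Fin m → ℤˣ) j : ℤˣ) : ℤ)) = - ∏ j, (ε j : ℤ) := by
      intro ε
      have h := Finset.prod_pi_mulSingle' (σ l) (-1 : ℤˣ) Finset.univ
      simp only [Finset.mem_univ, if_true] at h
      simp only [Pi.mul_apply, Units.val_mul, Finset.prod_mul_distrib]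
      rw [← Units.coe_prod (Pi.mulSingle (σ l) (-1 : ℤˣ)), h]
      simp
    have hpm : ∀ ε : Fin m → ℤˣ, (∏ j, (ε j : ℤ)) = 1 ∨ (∏ j, (ε j : ℤ)) = -1 := by
      intro ε
      rw [← Units.coe_prod]
      rcases Int.units_eq_one_or (∏ j, ε j) with h | h <;> simp [h]
    refine Finset.sum_nbij' (fun ε => ε * Pi.mulSingle (σ l) (-1))
      (fun ε => ε * Pi.mulSingle (σ l) (-1)) ?_ ?_ ?_ ?_ ?_
    · intro ε hε
      simp only [Finset.mem_filter, Finset.mem_univ, true_and] at hε ⊢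
      rw [hprod, hε]; norm_num
    · intro ε hε
      simp only [Finset.mem_filter, Finset.mem_univ, true_and] at hε ⊢
      rw [hprod]
      rcases hpm ε with h | h
      · exact absurd h hε
      · rw [h]; norm_num
    · intro ε _; exact hinv ε
    · intro ε _; exact hinv ε
    · intro ε _
      congr 3
      refine Finset.sum_congr rfl fun j _ => ?_
      congr 2
      by_cases hj : j = σ l
      · subst hj
        simp [hl]
      · have : σ⁻¹ j ≠ l := by
          intro h; apply hj; rw [← h]; simp
        rw [hne _ this]
        simp [hj]
  rw [hflip, Finset.sum_filter_add_sum_filter_not, ← Finset.mul_sum]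
  have hs : Equiv.Perm.sign ((Equiv.inv (Equiv.Perm (Fin m))) σ) = Equiv.Perm.sign σ := by
    simp
  rw [hs]
  congr 1
  have hun : ∀ g : ℤˣ → ℂ, ∑ u : ℤˣ, g u = g 1 + g (-1) := by
    intro g
    rw [show (Finset.univ : Finset ℤˣ) = {1, -1} from rfl,
      Finset.sum_pair (by decide)]
  have hM : ∀ j : Fin m, (Matrix.of fun i j => ccos θ (lam i) j)
      ((Equiv.inv (Equiv.Perm (Fin m))) σ j) j =
      ∑ u : ℤˣ, Complex.exp (Complex.I *
        ((((u : ℤ) * lam (σ⁻¹ j) : ℤ) : ℂ) * ((θ j : ℝ) : ℂ))) := by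
    intro j
    rw [hun]
    simp [ccos]
  rw [Finset.prod_congr rfl fun j _ => hM j, Finset.prod_univ_sum, Fintype.piFinset_univ]
  refine Finset.sum_congr rfl fun ε _ => ?_
  rw [← Complex.exp_sum, Finset.mul_sum]

lemma Avec_zero (m : ℕ) (lam : Fin m → ℤ) (θ : Fin m → ℝ) (l : Fin m) (hl : lam l = 0) :
    2 * Avec m lam θ = Ddet m lam θ := by
  rw [two_mul]
  exact Avec_add m lam lam θ l (by simp [hl]) (fun _ _ => rfl)

lemma Ddet_rev (m : ℕ) (lam mu : Fin m → ℤ) (θ : Fin m → ℝ) (h : ∀ i, lam (Fin.rev i) = mu i) :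
    Ddet m lam θ = ((Equiv.Perm.sign (Fin.revPerm : Equiv.Perm (Fin m)) : ℤ) : ℂ) *
      Ddet m mu θ := by
  unfold Ddet
  rw [← Matrix.det_permute]
  congr 1
  ext i j
  simp [← h]

/-- The signs `1, 0, -1, 0, 1, …`. -/
def fsg (k : ℕ) : ℂ := if Even k then (-1) ^ (k / 2) else 0

lemma sum_even (m : ℕ) (h : ℕ → ℂ) :
    ∑ k ∈ Finset.range (m + 1), (if Even k then h k else 0) =
      ∑ j ∈ Finset.range (m / 2 + 1), h (2 * j) := by
  rw [← Finset.sum_filter]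
  refine Finset.sum_nbij' (fun k => k / 2) (fun j => 2 * j) ?_ ?_ ?_ ?_ ?_
  · intro k hk
    simp only [Finset.mem_filter, Finset.mem_range] at hk ⊢
    omega
  · intro k hk
    simp only [Finset.mem_filter, Finset.mem_range] at hk ⊢
    exact ⟨by omega, even_two_mul k⟩
  · intro k hk
    simp only [Finset.mem_filter, Finset.mem_range, Nat.even_iff] at hk
    omega
  · intro k hk
    simp
  · intro k hk
    simp only [Finset.mem_filter, Finset.mem_range, Nat.even_iff] at hk
    congr 1
    omega

/-- The multilinear identity. -/
lemma det_identity (m : ℕ) (a : ℕ → Fin m → ℂ) :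
    Matrix.det (Matrix.of fun (r j : Fin m) =>
      a (r + 1) j + (if 1 ≤ (r : ℕ) then a (r - 1) j else 0)) =
    ∑ j ∈ Finset.range (m / 2 + 1), (-1 : ℂ) ^ j *
      Matrix.det (Matrix.of fun (r c : Fin m) => a (if (r : ℕ) < 2 * j then r else r + 1) c) := by
  let M : Matrix (Fin (m + 1)) (Fin (m + 1)) ℂ :=
    Matrix.of fun i => Fin.cons (fsg i) (fun j => a i j)
  let P : Matrix (Fin (m + 1)) (Fin (m + 1)) ℂ :=
    Matrix.of fun i l => if (l : ℕ) = i then 1 else if (l : ℕ) + 2 = i then 1 else 0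
  have hP : P.det = 1 := by
    rw [Matrix.det_of_isLowerTriangular]
    · simp [P]
    · intro i j hij
      have hij' : (i : ℕ) < j := by simpa using hij
      simp only [P, Matrix.of_apply]
      rw [if_neg (by omega), if_neg (by omega)]
  have hPM : ∀ i c, (P * M) i c = M i c +
      (if h : 2 ≤ (i : ℕ) then M ⟨i - 2, by omega⟩ c else 0) := by
    intro i c
    rw [Matrix.mul_apply]
    have : ∀ l, P i l * M l c = (if l = i then M l c else 0) +
        (if (l : ℕ) + 2 = i then M l c else 0) := by
      intro l
      simp only [P, Matrix.of_apply, Fin.ext_iff]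
      split_ifs <;> first | omega | simp
    simp only [this, Finset.sum_add_distrib]
    congr 1
    · simp
    · split_ifs with h
      · rw [Finset.sum_eq_single ⟨i - 2, by omega⟩]
        · rw [if_pos]; simp only []; omega
        · intro l _ hl
          rw [if_neg]
          intro h'
          apply hl
          apply Fin.ext
          simp only []
          omega
        · simp
      · refine Finset.sum_eq_zero fun l _ => ?_
        rw [if_neg (by omega)]
  have h1 : (P * M).det = M.det := by rw [Matrix.det_mul, hP, one_mul]
  have hf : ∀ k, fsg (k + 2) = - fsg k := by
    intro k
    unfold fsg
    rw [show (k + 2) / 2 = k / 2 + 1 by omega, pow_succ]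
    simp only [Nat.even_add, even_two, iff_true]
    split_ifs <;> simp
  have h2 : (P * M).det = Matrix.det (Matrix.of fun (r j : Fin m) =>
      a (r + 1) j + (if 1 ≤ (r : ℕ) then a (r - 1) j else 0)) := by
    rw [Matrix.det_succ_column_zero, Finset.sum_eq_single 0]
    · have h00 : (P * M) 0 0 = 1 := by
        rw [hPM, dif_neg (by simp)]
        simp [M, fsg]
      rw [h00, Fin.val_zero, pow_zero, one_mul, one_mul]
      congr 1
      ext r c
      simp only [Matrix.submatrix_apply, Fin.zero_succAbove, Matrix.of_apply]
      rw [hPM]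
      simp only [M, Matrix.of_apply, Fin.cons_succ, Fin.val_succ]
      congr 1
      by_cases hr : 1 ≤ (r : ℕ)
      · rw [dif_pos (by omega), if_pos hr]
        congr 1
      · rw [dif_neg (by omega), if_neg hr]
    · intro i _ hi
      rw [hPM]
      simp only [M, Matrix.of_apply, Fin.cons_zero]
      have hi' : (i : ℕ) ≠ 0 := fun h => hi (Fin.ext h)
      have : fsg i + (if h : 2 ≤ (i : ℕ) then fsg (i - 2) else 0) = 0 := by
        split_ifs with h
        · have := hf (i - 2)
          rw [show (i : ℕ) - 2 + 2 = i by omega] at this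
          rw [this]; ring
        · have : (i : ℕ) = 1 := by omega
          simp [this, fsg]
      rw [this]
      simp
    · simp
  rw [← h2, h1, Matrix.det_succ_column_zero]
  let E : ℕ → ℂ := fun k =>
    Matrix.det (Matrix.of fun (r c : Fin m) => a (if (r : ℕ) < k then r else r + 1) c)
  have h3 : ∀ i : Fin (m + 1), (-1 : ℂ) ^ (i : ℕ) * M i 0 *
      Matrix.det (M.submatrix i.succAbove Fin.succ) =
      (fun k : ℕ => if Even k then (-1) ^ (k / 2) * E k else 0) i := by
    intro i
    have : M.submatrix i.succAbove Fin.succ =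
        Matrix.of fun (r c : Fin m) => a (if (r : ℕ) < i then r else r + 1) c := by
      ext r c
      simp only [M, Matrix.submatrix_apply, Matrix.of_apply, Fin.cons_succ]
      congr 1
      unfold Fin.succAbove
      simp only [Fin.lt_def, Fin.val_castSucc]
      split_ifs <;> simp
    rw [this]
    simp only [M, Matrix.of_apply, Fin.cons_zero, E, fsg]
    split_ifs with h
    · rw [h.neg_one_pow]; ring
    · ring
  rw [Finset.sum_congr rfl fun i _ => h3 i,
    Fin.sum_univ_eq_sum_range (fun k : ℕ => if Even k then (-1 : ℂ) ^ (k / 2) * E k else 0),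
    sum_even]
  refine Finset.sum_congr rfl fun j _ => ?_
  rw [show 2 * j / 2 = j by omega]

lemma ccos_step {m : ℕ} (θ : Fin m → ℝ) (l : ℤ) (j : Fin m) :
    ((2 * Real.cos (θ j) : ℝ) : ℂ) * ccos θ l j = ccos θ (l + 1) j + ccos θ (l - 1) j := by
  have h : ((2 * Real.cos (θ j) : ℝ) : ℂ) =
      Complex.exp (Complex.I * θ j) + Complex.exp (-(Complex.I * θ j)) := by
    push_cast
    rw [Complex.cos]
    rw [show -(θ j : ℂ) * Complex.I = -(Complex.I * θ j) by ring, mul_comm (θ j : ℂ)]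
    ring
  rw [h]
  unfold ccos
  simp only [add_mul, mul_add, ← Complex.exp_add]
  push_cast
  rw [show Complex.I * θ j + Complex.I * (l * θ j) = Complex.I * ((l + 1) * θ j) by ring,
    show -(Complex.I * θ j) + Complex.I * (l * θ j) = Complex.I * ((l - 1) * θ j) by ring,
    show Complex.I * θ j + Complex.I * (-l * θ j) = Complex.I * (-(l - 1) * θ j) by ring,
    show -(Complex.I * θ j) + Complex.I * (-l * θ j) = Complex.I * (-(l + 1) * θ j) by ring]
  ring

lemma ccos_neg {m : ℕ} (θ : Fin m → ℝ) (l : ℤ) (j : Fin m) : ccos θ (-l) j = ccos θ l j := by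
  unfold ccos
  rw [neg_neg, add_comm]

lemma Ddet_mul (m : ℕ) (hm : 1 ≤ m) (θ : Fin m → ℝ) :
    (∏ j : Fin m, ((2 * Real.cos (θ j) : ℝ) : ℂ)) * Ddet m (fun i => (i : ℤ)) θ =
    2 * Matrix.det (Matrix.of fun (r j : Fin m) =>
      ccos θ ((r + 1 : ℕ) : ℤ) j +
        (if 1 ≤ (r : ℕ) then ccos θ (((r : ℕ) - 1 : ℕ) : ℤ) j else 0)) := by
  unfold Ddet
  rw [← Matrix.det_mul_row]
  have hv : (∏ i : Fin m, (if (i : ℕ) = 0 then (2 : ℂ) else 1)) = 2 := by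
    rw [Finset.prod_eq_single ⟨0, by omega⟩]
    · simp
    · intro i _ hi
      rw [if_neg]
      intro h
      exact hi (Fin.ext h)
    · simp
  conv_rhs => rw [← hv]
  rw [← Matrix.det_mul_column]
  congr 1
  ext r j
  simp only [Matrix.of_apply]
  rw [ccos_step]
  by_cases hr : (r : ℕ) = 0
  · rw [if_pos hr, if_neg (by omega), hr]
    have := ccos_neg θ 1 j
    simp only [Nat.cast_zero, zero_add, zero_sub, this, Nat.cast_one]
    ring
  · rw [if_neg hr, if_pos (by omega)]
    push_cast [Nat.one_le_iff_ne_zero.mpr hr]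
    ring

/-- The `k = m` case of the expansion of the elementary symmetric function `S_{m,m}`
of the `2cos θ_j` into irreducible characters of `SO(2m)`, multiplied by the Weyl
denominator `A_δ`. -/
theorem smm_expansion (m : ℕ) (hm : 1 ≤ m) (θ : Fin m → ℝ) :
    Avec m (deltaVec m) θ * ∏ j : Fin m, ((2 * Real.cos (θ j) : ℝ) : ℂ) =
    (Avec m (fun j => deltaVec m j + 1) θ +
     Avec m (fun j => deltaVec m j + (if (j : ℕ) = m - 1 then -1 else 1)) θ) +
    ∑ j ∈ Finset.Icc 1 (m / 2),
      (-1 : ℂ) ^ j * (Nfun (2 * j) j : ℂ) *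
        Avec m (fun i => deltaVec m i + omegaVec m (m - 2 * j) i) θ := by
  let s : ℂ := ((Equiv.Perm.sign (Fin.revPerm : Equiv.Perm (Fin m)) : ℤ) : ℂ)
  let E : ℕ → ℂ := fun k =>
    Matrix.det (Matrix.of fun (r c : Fin m) =>
      ccos θ ((if (r : ℕ) < k then (r : ℕ) else r + 1 : ℕ) : ℤ) c)
  let l : Fin m := ⟨m - 1, by omega⟩
  have hD : 2 * Avec m (deltaVec m) θ = s * Ddet m (fun i => (i : ℤ)) θ := by
    rw [Avec_zero m _ θ l (by simp only [deltaVec, l]; omega)]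
    exact Ddet_rev m _ _ θ (fun i => by simp only [deltaVec, Fin.val_rev]; omega)
  have h0 : Avec m (fun j => deltaVec m j + 1) θ +
      Avec m (fun j => deltaVec m j + (if (j : ℕ) = m - 1 then -1 else 1)) θ = s * E 0 := by
    rw [Avec_add m _ _ θ l (by simp only [deltaVec, l, if_true]; omega)
      (fun i hi => by
        have : (i : ℕ) ≠ m - 1 := fun h => hi (Fin.ext h)
        simp only [if_neg this])]
    rw [Ddet_rev m _ (fun i => ((i + 1 : ℕ) : ℤ)) θ
      (fun i => by simp only [deltaVec, Fin.val_rev]; omega)]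
    simp only [E, Ddet, Nat.not_lt_zero, if_false, s]
  have hj : ∀ j ∈ Finset.Icc 1 (m / 2), (-1 : ℂ) ^ j * (Nfun (2 * j) j : ℂ) *
        Avec m (fun i => deltaVec m i + omegaVec m (m - 2 * j) i) θ =
        s * ((-1 : ℂ) ^ j * E (2 * j)) := by
    intro j hj
    rw [Finset.mem_Icc] at hj
    rw [Nfun_diag j hj.1]
    have hA : 2 * Avec m (fun i => deltaVec m i + omegaVec m (m - 2 * j) i) θ = s * E (2 * j) := by
      rw [Avec_zero m _ θ l (by
        simp only [deltaVec, omegaVec, l]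
        rw [if_neg (by omega)]
        omega)]
      rw [Ddet_rev m _ (fun i => ((if (i : ℕ) < 2 * j then (i : ℕ) else i + 1 : ℕ) : ℤ)) θ
        (fun i => by
          simp only [deltaVec, omegaVec, Fin.val_rev]
          split_ifs <;> omega)]
      simp only [E, Ddet, s]
    push_cast
    rw [mul_assoc, hA]
    ring
  rw [h0, Finset.sum_congr rfl hj, ← Finset.mul_sum, ← mul_add]
  have hid := det_identity m (fun k c => ccos θ (k : ℤ) c)
  have hmul := Ddet_mul m hm θ
  rw [hid, Finset.sum_range_succ'] at hmul
  have hIcc : ∑ j ∈ Finset.Icc 1 (m / 2), (-1 : ℂ) ^ j * E (2 * j) =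
      ∑ j ∈ Finset.range (m / 2), (-1 : ℂ) ^ (j + 1) * E (2 * (j + 1)) := by
    rw [Finset.range_eq_Ico, Finset.sum_Ico_add' (fun j => (-1 : ℂ) ^ j * E (2 * j)) 0 (m / 2) 1]
    rfl
  rw [hIcc]
  have hfin : (∏ j : Fin m, ((2 * Real.cos (θ j) : ℝ) : ℂ)) * Ddet m (fun i => (i : ℤ)) θ =
      2 * (∑ j ∈ Finset.range (m / 2), (-1 : ℂ) ^ (j + 1) * E (2 * (j + 1)) +
        (-1 : ℂ) ^ 0 * E 0) := hmul
  rw [pow_zero, one_mul] at hfin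
  apply mul_left_cancel₀ (two_ne_zero : (2 : ℂ) ≠ 0)
  rw [← mul_assoc, hD]
  linear_combination s * hfin
end

section
/- Let m ≥ 1 and 0 ≤ k < m be integers. For every θ = (θ₁,…,θ_m) ∈ ℝ^m, the following identity of complex numbers holds: A_δ(θ) · e_k(2cos θ₁, …, 2cos θ_m) = Σ_{j=0}^{⌊k/2⌋} (−1)^j · N(m+2j−k, j) · A_{δ+ω_{k−2j}}(θ), where e_k denotes the k-th elementary symmetric polynomial in m variables. (This expresses the elementary symmetric function S_{m,k} of the 2cos θ_j as a linear combination of irreducible characters of SO(2m), after multiplying both sides by the Weyl denominator A_δ.) -/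
open scoped BigOperators

namespace SMK
open Polynomial

/-! Part 1: the counting function. -/

def S (n k : ℕ) : Set (Fin k → ℤ) := {t | 
    (∀ h : 0 < k, 1 ≤ t ⟨0, h⟩) ∧
    (∀ i : ℕ, ∀ h : i + 1 < k, t ⟨i, by omega⟩ + 2 ≤ t ⟨i + 1, h⟩) ∧
    (∀ h : 0 < k, t ⟨k - 1, by omega⟩ ≤ (n : ℤ) - 1)}

lemma N0_eq (n k : ℕ) : N0 n k = (S n k).ncard := by
  rw [← Nat.card_coe_set_eq]; rfl

lemma S_zero (n : ℕ) : S n 0 = Set.univ := by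
  ext t; simp [S]

lemma S_empty (n k : ℕ) (h : n < 2 * k) : S n k = ∅ := by
  ext t
  simp only [S, Set.mem_ofPred_eq, Set.mem_empty_iff_false, iff_false]
  rintro ⟨h1, h2, h3⟩
  have key : ∀ i : ℕ, ∀ hi : i < k, (2 * i + 1 : ℤ) ≤ t ⟨i, hi⟩ := by
    intro i
    induction i with
    | zero => intro hi; simpa using h1 hi
    | succ i ih => 
      intro hi
      have := ih (by omega)
      have := h2 i hi
      push_cast; linarith
  have a := key (k-1) (by omega)
  have b := h3 (by omega)
  omega

lemma S_succ (n k : ℕ) : S (n+2) (k+1) = 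
    S (n+1) (k+1) ∪ (fun t : Fin k → ℤ => (Fin.snoc t ((n:ℤ)+1) : Fin (k+1) → ℤ)) '' S n k := by
  ext t
  simp only [S, Set.mem_ofPred_eq, Set.mem_union, Set.mem_image]
  constructor
  · rintro ⟨h1, h2, h3⟩
    by_cases hl : t (Fin.last k) = n + 1
    · right
      refine ⟨fun i => t i.castSucc, ⟨?_, ?_, ?_⟩, ?_⟩
      · intro h; exact h1 (by omega)
      · intro i h; exact h2 i (by omega)
      · intro h
        have := h2 (k-1) (by omega)
        have e : (⟨k - 1 + 1, by omega⟩ : Fin (k+1)) = Fin.last k := by ext; simp; omega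
        rw [e, hl] at this
        have e2 : (Fin.castSucc ⟨k-1, by omega⟩ : Fin (k+1)) = ⟨k-1, by omega⟩ := rfl
        simp only [e2]
        linarith
      · rw [← hl]; exact Fin.snoc_init_self t
    · left
      refine ⟨h1, h2, fun h => ?_⟩
      have := h3 h
      have e : (⟨k + 1 - 1, by omega⟩ : Fin (k+1)) = Fin.last k := rfl
      rw [e] at this ⊢
      push_cast at this ⊢
      omega
  · rintro (⟨h1, h2, h3⟩ | ⟨s, ⟨h1, h2, h3⟩, rfl⟩)
    · refine ⟨h1, h2, fun h => ?_⟩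
      have := h3 h
      push_cast at *
      linarith
    · refine ⟨?_, ?_, ?_⟩
      · intro h
        by_cases hk : 0 < k
        · have := h1 hk
          simp only [Fin.snoc, hk, dif_pos]
          exact this
        · simp [Fin.snoc, hk]
      · intro i h
        by_cases hi : i + 1 < k
        · have := h2 i hi
          simpa [Fin.snoc, hi, show i < k by omega] using this
        · have := h3 (by omega)
          have e : i = k - 1 := by omega
          subst e
          simp [Fin.snoc, show k - 1 < k by omega, show ¬ (k - 1 + 1 < k) by omega]
          linarith
      · intro h
        simp [Fin.snoc]

lemma S_finite (n k : ℕ) : (S n k).Finite := by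
  induction n using Nat.strong_induction_on generalizing k with
  | _ n ih =>
    rcases k with _ | k
    · exact Set.toFinite _
    · rcases n with _ | _ | n
      · rw [S_empty _ _ (by omega)]; exact Set.finite_empty
      · rw [S_empty _ _ (by omega)]; exact Set.finite_empty
      · rw [S_succ]
        exact (ih _ (by omega) _).union ((ih _ (by omega) _).image _)

lemma N0_zero (n : ℕ) : N0 n 0 = 1 := by
  rw [N0_eq, S_zero, Set.ncard_univ]; simp

lemma N0_empty (n k : ℕ) (h : n < 2 * k) : N0 n k = 0 := by
  rw [N0_eq, S_empty n k h, Set.ncard_empty]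

lemma N0_succ (n k : ℕ) : N0 (n+2) (k+1) = N0 (n+1) (k+1) + N0 n k := by
  rw [N0_eq, N0_eq, N0_eq, S_succ, Set.ncard_union_eq _ (S_finite _ _) ((S_finite _ _).image _),
    Set.ncard_image_of_injective]
  · intro a b hab
    have := congrArg (fun f => Fin.init (α := fun _ => ℤ) f) hab
    simpa using this
  · rw [Set.disjoint_left]
    rintro _ ⟨_, _, h3⟩ ⟨s, _, rfl⟩
    have := h3 (by omega)
    simp [Fin.snoc] at this

lemma N0_diag (k : ℕ) : N0 (2 * k) k = 1 := by
  induction k with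
  | zero => exact N0_zero _
  | succ k ih => rw [show 2 * (k+1) = 2 * k + 2 by ring, N0_succ, ih, N0_empty _ _ (by omega)]

lemma N_diag (k : ℕ) (hk : k ≠ 0) : Nfun (2 * k) k = 2 := by
  obtain ⟨k, rfl⟩ := Nat.exists_eq_succ_of_ne_zero hk
  rw [Nfun, if_neg hk, N0_diag, show 2 * k.succ - 2 = 2 * k by omega, Nat.succ_sub_one, N0_diag]

lemma N_rec (i k : ℕ) : Nfun (i + 2 * k + 2) (k+1) = Nfun (i + 2 * k + 1) (k+1) + Nfun (i + 2 * k) k := by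
  rcases k with _ | k
  · simp [Nfun, N0_succ, N0_zero]
  · simp only [Nfun, Nat.add_eq_zero_iff, one_ne_zero, and_false, if_false, Nat.add_sub_cancel]
    rw [N0_succ]
    rw [show i + 2 * (k+1) = i + 2 * k + 2 by ring,
     show i + 2 * k + 2 + 1 - 2 = i + 2 * k + 1 by omega, Nat.add_sub_cancel, N0_succ (i + 2 * k) k]
    ring

/-! Part 2: Chebyshev polynomials. -/

noncomputable def P : ℕ → ℂ[X]
  | 0 => 2
  | 1 => X
  | n + 2 => X * P (n + 1) - P n

lemma P_coeff_zero (n i : ℕ) (h : n < i ∨ Odd (n + i)) : (P n).coeff i = 0 := by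
  induction n using Nat.strong_induction_on generalizing i with
  | _ n ih =>
    rcases n with _ | _ | n
    · have : i ≠ 0 := by rintro rfl; simp at h
      rw [P, show (2 : ℂ[X]) = C 2 from rfl, coeff_C, if_neg this]
    · have : i ≠ 1 := by rintro rfl; revert h; decide
      rw [P, coeff_X, if_neg this.symm]
    · rw [P, coeff_sub, ih n (by omega) i (by simp only [Nat.odd_iff] at *; omega)]
      rcases i with _ | i
      · simp
      · rw [coeff_X_mul, ih (n+1) (by omega) i (by simp only [Nat.odd_iff] at *; omega)]; simp

lemma P_coeff (n i j : ℕ) (hn : n = i + 2 * j) (h : n ≠ 0) : 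
    (P n).coeff i = (-1) ^ j * (Nfun n j : ℂ) := by
  induction n using Nat.strong_induction_on generalizing i j with
  | _ n ih =>
    rcases n with _ | _ | n
    · omega
    · obtain rfl : i = 1 := by omega
      obtain rfl : j = 0 := by omega
      simp [P, Nfun]
    · rw [P, coeff_sub]
      rcases i with _ | i
      · rw [mul_coeff_zero, coeff_X_zero, zero_mul]
        rw [show n + 2 = 2 * j by omega, N_diag j (by omega)]
        rcases Nat.eq_zero_or_pos n with rfl | hn0
        · obtain rfl : j = 1 := by omega
          rw [P, show (2 : ℂ[X]) = C 2 from rfl, coeff_C]; norm_num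
        · rw [ih n (by omega) 0 (j-1) (by omega) (by omega)]
          obtain ⟨j, rfl⟩ : ∃ j', j = j' + 1 := ⟨j-1, by omega⟩
          obtain rfl : n = 2 * j := by omega
          rw [Nat.add_sub_cancel, N_diag j (by omega)]; push_cast; ring
      · rw [coeff_X_mul, ih (n+1) (by omega) i j (by omega) (by omega)]
        rcases j with _ | j
        · rw [P_coeff_zero n (i+1) (by omega)]; simp [Nfun]
        · rw [ih n (by omega) (i+1) j (by omega) (by omega)]
          obtain rfl : n = i + 1 + 2 * j := by omega
          rw [N_rec]; push_cast; ring

lemma P_natDegree (n : ℕ) : (P n).natDegree ≤ n :=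
  natDegree_le_iff_coeff_eq_zero.2 fun i hi => P_coeff_zero n i (Or.inl hi)

lemma P_eval (n : ℕ) (x : ℝ) : (P n).eval ((2 * Real.cos x : ℝ) : ℂ) = 2 * Complex.cos (n * x) := by
  induction n using Nat.strong_induction_on with
  | _ n ih =>
    rcases n with _ | _ | n
    · simp [P]
    · simp [P]
    · rw [P, eval_sub, eval_mul, eval_X, ih _ (by omega), ih _ (by omega)]
      push_cast
      have e1 : ((n : ℂ) + 1 + 1) * x = ((n:ℂ)+1) * x + x := by ring
      have e2 : (n : ℂ) * x = ((n:ℂ)+1) * x - x := by ring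
      rw [e1, e2, Complex.cos_add, Complex.cos_sub]; ring

noncomputable def Q (n : ℕ) : ℂ[X] := if n = 0 then 1 else P n

lemma Q_monic_deg (n : ℕ) : (Q n).natDegree = n ∧ (Q n).Monic := by
  rcases Nat.eq_zero_or_pos n with rfl | h
  · simp [Q]
  · have hc : (P n).coeff n = 1 := by rw [P_coeff n n 0 (by omega) (by omega)]; simp [Nfun]
    rw [Q, if_neg (by omega)]
    have hd : (P n).natDegree = n := le_antisymm (P_natDegree n) (le_natDegree_of_ne_zero (by rw [hc]; simp))
    exact ⟨hd, by rw [Monic, leadingCoeff, hd, hc]⟩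

/-! Part 3: Avec as determinant. -/

lemma two_Avec (m : ℕ) (lam : Fin m → ℕ) (θ : Fin m → ℝ) (i0 : Fin m) (h0 : lam i0 = 0) :
    2 * Avec m (fun i => (lam i : ℤ)) θ = 
      (Matrix.of fun j i => (P (lam i)).eval ((2 * Real.cos (θ j) : ℝ) : ℂ)).det := by
  classical
  rw [Matrix.det_apply, Avec, Finset.mul_sum]
  refine Finset.sum_congr rfl fun σ _ => ?_
  rw [← Finset.mul_sum, mul_left_comm, Units.smul_def, zsmul_eq_mul]
  congr 1
  set F : ℤˣ → Fin m → ℂ := fun e j => Complex.exp (Complex.I * ((((e : ℤ) * (lam (σ⁻¹ j) : ℤ) : ℤ) : ℂ) * (θ j : ℂ))) with hF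
  have h1 : ∀ ε : Fin m → ℤˣ, Complex.exp (Complex.I *
          ∑ j : Fin m, (((ε j : ℤ) * (lam (σ⁻¹ j) : ℤ) : ℤ) : ℂ) * ((θ j : ℝ) : ℂ)) = ∏ j, F (ε j) j := by
    intro ε
    rw [Finset.mul_sum, Complex.exp_sum]
  simp only [h1]
  have hU : ∀ f : ℤˣ → ℂ, ∑ e, f e = f 1 + f (-1) := by
    intro f
    have : (Finset.univ : Finset ℤˣ) = {1, -1} := by decide
    rw [this, Finset.sum_pair (by decide)]
  have h2 : ∑ ε : Fin m → ℤˣ, ∏ j, F (ε j) j = ∏ j, (F 1 j + F (-1) j) := by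
    have h2' : ∀ j, F 1 j + F (-1) j = ∑ e, F e j := fun j => (hU (fun e => F e j)).symm
    simp only [h2']
    rw [Finset.prod_univ_sum, Fintype.piFinset_univ]
  have h3 : ∑ ε : Fin m → ℤˣ, ((∏ j, (ε j : ℤ) : ℤ) : ℂ) * ∏ j, F (ε j) j = 0 := by
    have : ∏ j, (∑ e : ℤˣ, ((e : ℤ) : ℂ) * F e j) = 0 := by
      refine Finset.prod_eq_zero (Finset.mem_univ (σ i0)) ?_
      rw [hU (fun e => ((e : ℤ) : ℂ) * F e (σ i0))]
      simp [hF, h0]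
    rw [← this, Finset.prod_univ_sum, Fintype.piFinset_univ]
    refine Finset.sum_congr rfl fun ε _ => ?_
    rw [Finset.prod_mul_distrib]; push_cast; rfl
  have h4 : 2 * ∑ ε ∈ Finset.univ.filter (fun ε : Fin m → ℤˣ => (∏ j, (ε j : ℤ)) = 1), ∏ j, F (ε j) j
      = ∑ ε : Fin m → ℤˣ, ∏ j, F (ε j) j + ∑ ε : Fin m → ℤˣ, ((∏ j, (ε j : ℤ) : ℤ) : ℂ) * ∏ j, F (ε j) j := by
    rw [Finset.sum_filter, Finset.mul_sum, ← Finset.sum_add_distrib]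
    refine Finset.sum_congr rfl fun ε _ => ?_
    have : (∏ j, (ε j : ℤ)) = ((∏ j, ε j : ℤˣ) : ℤ) := by simp
    rw [this]
    rcases Int.units_eq_one_or (∏ j, ε j) with h | h <;> rw [h]
    · simp; ring
    · simp
  rw [h4, h3, add_zero, h2, ← Equiv.prod_comp σ]
  refine Finset.prod_congr rfl fun i _ => ?_
  rw [Matrix.of_apply, P_eval, Complex.two_cos]
  have hinv : σ⁻¹ (σ i) = i := σ.symm_apply_apply i
  simp only [hF, hinv]
  congr 2
  · push_cast; ring
  · push_cast; ring

lemma Avec_eq (m : ℕ) (lam : Fin m → ℕ) (θ : Fin m → ℝ) (i0 : Fin m) (h0 : ∀ i, lam i = 0 ↔ i = i0) :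
    Avec m (fun i => (lam i : ℤ)) θ = 
      (Matrix.of fun j i => (Q (lam i)).eval ((2 * Real.cos (θ j) : ℝ) : ℂ)).det := by
  have h := two_Avec m lam θ i0 ((h0 i0).2 rfl)
  have : (Matrix.of fun j i => (P (lam i)).eval ((2 * Real.cos (θ j) : ℝ) : ℂ)) = 
    Matrix.of fun j i => (if i = i0 then (2:ℂ) else 1) * (Matrix.of fun j i => (Q (lam i)).eval ((2 * Real.cos (θ j) : ℝ) : ℂ)) j i := by
    ext j i
    simp only [Matrix.of_apply, Q, h0]
    split_ifs with hi
    · rw [(h0 i).2 hi]; simp [P]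
    · simp
  rw [this, Matrix.det_mul_row, Finset.prod_ite_eq'] at h
  simpa using h

/-! Part 4: Laplace expansion. -/

noncomputable def Mi (m : ℕ) (x : Fin m → ℂ) (i : Fin (m+1)) : ℂ :=
  (Matrix.of fun (j l : Fin m) => (Q (i.succAbove l : Fin (m+1))).eval (x j)).det

lemma expansion (m : ℕ) (x : Fin m → ℂ) (t : ℂ) :
    (-1) ^ m * (∏ j, (t + - x j)) * Mi m x (Fin.last m) = 
      ∑ i : Fin (m+1), (-1) ^ (i : ℕ) * (Q i).eval t * Mi m x i := by
  have h := Matrix.det_eval_matrixOfPolynomials_eq_det_vandermonde (Fin.cons t x : Fin (m+1) → ℂ)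
    (fun i => Q i) (fun i => (Q_monic_deg i).1) (fun i => (Q_monic_deg i).2)
  have h' := Matrix.det_eval_matrixOfPolynomials_eq_det_vandermonde x
    (fun i => Q i) (fun i => (Q_monic_deg i).1) (fun i => (Q_monic_deg i).2)
  have hl : Mi m x (Fin.last m) = (Matrix.vandermonde x).det := by
    rw [h', Mi]; simp
  rw [Matrix.det_succ_row_zero (Matrix.of _)] at h
  have e : (-1) ^ m * (∏ j, (t + - x j)) = ∏ j, (x j - t) := by
    have : (-1 : ℂ) ^ m = ∏ _j : Fin m, (-1) := by simp
    rw [this, ← Finset.prod_mul_distrib]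
    exact Finset.prod_congr rfl fun _ _ => by ring
  rw [e, hl]
  have hv : (Matrix.vandermonde (Fin.cons t x : Fin (m+1) → ℂ)).det = (∏ j, (x j - t)) * (Matrix.vandermonde x).det := by
    rw [Matrix.det_vandermonde, Matrix.det_vandermonde, Fin.prod_univ_succ]
    simp
  rw [← hv, h]
  rfl

lemma expansion_coeff (m k : ℕ) (hk : k < m) (x : Fin m → ℂ) :
    (-1) ^ (m + k) * (∑ s ∈ (Finset.univ : Finset (Fin m)).powersetCard k, ∏ j ∈ s, x j) * Mi m x (Fin.last m) = 
      ∑ i : Fin (m+1), (-1) ^ (i : ℕ) * (Q i).coeff (m - k) * Mi m x i := by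
  have h : C ((-1) ^ m * Mi m x (Fin.last m)) * ∏ j, (X + C (- x j)) = 
      ∑ i : Fin (m+1), C ((-1) ^ (i : ℕ) * Mi m x i) * Q i := by
    apply Polynomial.funext
    intro t
    have := expansion m x t
    simp only [eval_mul, eval_C, eval_prod, eval_add, eval_X, eval_finsetSum]
    rw [mul_right_comm, this]
    exact Finset.sum_congr rfl fun _ _ => by ring
  have h2 := congrArg (fun p => coeff p (m - k)) h
  simp only [coeff_C_mul, finsetSum_coeff] at h2
  rw [Finset.prod_X_add_C_coeff _ _ (by simp)] at h2
  have e : ∑ s ∈ (Finset.univ : Finset (Fin m)).powersetCard k, ∏ j ∈ s, (- x j) = 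
     (-1) ^ k * ∑ s ∈ (Finset.univ : Finset (Fin m)).powersetCard k, ∏ j ∈ s, x j := by
    rw [Finset.mul_sum]
    refine Finset.sum_congr rfl fun s hs => ?_
    rw [Finset.prod_neg, (Finset.mem_powersetCard.1 hs).2]
  rw [Finset.card_univ, Fintype.card_fin, show m - (m - k) = k by omega, e] at h2
  rw [pow_add]
  calc _ = _ := by ring
    _ = _ := h2
    _ = _ := Finset.sum_congr rfl fun _ _ => by ring

lemma Avec_Mi (m q : ℕ) (hq : q < m) (θ : Fin m → ℝ) (i : Fin (m+1)) (hi : (i : ℕ) = m - q) :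
    Avec m (fun i => deltaVec m i + omegaVec m q i) θ = 
      ((Equiv.Perm.sign (Fin.revPerm : Equiv.Perm (Fin m)) : ℤ) : ℂ) * 
        Mi m (fun j => ((2 * Real.cos (θ j) : ℝ) : ℂ)) i := by
  have key : ∀ l : Fin m, ((i.succAbove (Fin.revPerm l) : Fin (m+1)) : ℕ) = m - 1 - l + if (l : ℕ) < q then 1 else 0 := by
    intro l
    have := l.2
    simp only [Fin.succAbove, Fin.lt_def, Fin.revPerm_apply, Fin.val_castSucc, Fin.val_rev, hi]
    split_ifs <;> simp [Fin.val_rev] <;> omega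
  have e : (fun i => deltaVec m i + omegaVec m q i) = 
      fun l : Fin m => (((i.succAbove (Fin.revPerm l) : Fin (m+1)) : ℕ) : ℤ) := by
    ext l
    have := l.2
    rw [key, deltaVec, omegaVec]
    split_ifs <;> omega
  rw [e, Avec_eq m _ θ ⟨m - 1, by omega⟩, Mi, ← Matrix.det_permute']
  · rfl
  · intro l
    have := l.2
    rw [key, Fin.ext_iff]
    change _ ↔ (l : ℕ) = m - 1
    by_cases hl : (l : ℕ) < q
    · rw [if_pos hl]
      constructor <;> intro hh <;> omega
    · rw [if_neg hl]
      constructor <;> intro hh <;> omega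

end SMK

theorem smk_expansion (m k : ℕ) (hm : 1 ≤ m) (hk : k < m) (θ : Fin m → ℝ) :
    Avec m (deltaVec m) θ *
      (∑ s ∈ (Finset.univ : Finset (Fin m)).powersetCard k,
        ∏ j ∈ s, ((2 * Real.cos (θ j) : ℝ) : ℂ)) =
    ∑ j ∈ Finset.range (k / 2 + 1),
      (-1 : ℂ) ^ j * (Nfun (m + 2 * j - k) j : ℂ) *
        Avec m (fun i => deltaVec m i + omegaVec m (k - 2 * j) i) θ := by
  have hδ : deltaVec m = fun i => deltaVec m i + omegaVec m 0 i := by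
    ext i; simp [omegaVec]
  rw [hδ, SMK.Avec_Mi m 0 (by omega) θ (Fin.last m) (by simp), ← hδ]
  have h := SMK.expansion_coeff m k hk (fun j => ((2 * Real.cos (θ j) : ℝ) : ℂ))
  have hsq : ((-1 : ℂ) ^ (m + k)) * (-1) ^ (m + k) = 1 := by
    rw [← mul_pow]; simp
  set E := ∑ s ∈ (Finset.univ : Finset (Fin m)).powersetCard k,
        ∏ j ∈ s, ((2 * Real.cos (θ j) : ℝ) : ℂ) with hE
  set x : Fin m → ℂ := fun j => ((2 * Real.cos (θ j) : ℝ) : ℂ) with hx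
  set s : ℂ := ((Equiv.Perm.sign (Fin.revPerm : Equiv.Perm (Fin m)) : ℤ) : ℂ) with hs
  have h2 : s * SMK.Mi m x (Fin.last m) * E = 
      ∑ i : Fin (m+1), s * (-1) ^ (m + k) * ((-1) ^ (i : ℕ) * (SMK.Q i).coeff (m - k) * SMK.Mi m x i) := by
    rw [← Finset.mul_sum, ← h]
    linear_combination (- s * SMK.Mi m x (Fin.last m) * E) * hsq
  rw [h2]
  symm
  refine Finset.sum_of_injOn (fun j => (Fin.ofNat (m+1) (m - k + 2 * j))) ?_ ?_ ?_ ?_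
  · intro a ha b hb hab
    simp only [Finset.coe_range, Set.mem_Iio] at ha hb
    have := congrArg Fin.val hab
    simp only [Fin.val_ofNat] at this
    rw [Nat.mod_eq_of_lt (by omega), Nat.mod_eq_of_lt (by omega)] at this
    omega
  · intro a _; simp
  · intro i _ hi
    have : (SMK.Q i).coeff (m - k) = 0 := by
      rw [SMK.Q]
      split_ifs with h0
      · rw [Polynomial.coeff_one, if_neg (by omega)]
      · apply SMK.P_coeff_zero
        by_contra hcon
        rw [Nat.odd_iff] at hcon
        apply hi
        refine ⟨((i : ℕ) - (m - k)) / 2, ?_, ?_⟩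
        · simp only [Finset.coe_range, Set.mem_Iio]; omega
        · ext
          simp only [Fin.val_ofNat]
          rw [Nat.mod_eq_of_lt (by omega)]
          omega
    rw [this]; ring
  · intro j hj
    rw [Finset.mem_range] at hj
    have hv : ((Fin.ofNat (m+1) (m - k + 2 * j) : Fin (m+1)) : ℕ) = m - k + 2 * j := by
      simp only [Fin.val_ofNat]; exact Nat.mod_eq_of_lt (by omega)
    rw [SMK.Avec_Mi m (k - 2 * j) (by omega) θ (Fin.ofNat (m+1) (m - k + 2 * j)) (by omega), hv,
      SMK.Q, if_neg (by omega), SMK.P_coeff _ _ j rfl (by omega),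
      show m + 2 * j - k = m - k + 2 * j by omega]
    have hsg : (-1 : ℂ) ^ (m + k) * (-1) ^ (m - k + 2 * j) = 1 := by
      rw [← pow_add, show m + k + (m - k + 2 * j) = 2 * (m + j) by omega, pow_mul]; simp
    rw [← hs, ← hx]
    linear_combination (- (-1 : ℂ) ^ j * (Nfun (m - k + 2 * j) j : ℂ) * s * SMK.Mi m x (Fin.ofNat (m+1) (m - k + 2 * j))) * hsg
end

section
/- Let 0 ≤ α < 1 and C > 0, and let B ⊆ ℤ be a set of integers such that for every real T ≥ 1 the number of n ∈ B with |n| ≤ T is at most C·T^α. Then for every δ > 0 and every θ₀ ∈ ℝ there exists an infinitely differentiable function f : ℝ → ℂ which is periodic with period 2π, satisfies f(θ₀) = 1, vanishes at every θ ∈ ℝ whose distance to the set θ₀ + 2πℤ is at least δ, and whose Fourier coefficients vanish on B: ∫₀^{2π} f(θ) e^{−inθ} dθ = 0 for every n ∈ B. -/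
open scoped BigOperators


noncomputable def coefF (f : ℝ → ℂ) (n : ℤ) : ℂ :=
  ∫ θ in (0 : ℝ)..(2 * Real.pi), f θ * Complex.exp (-Complex.I * (n : ℂ) * (θ : ℂ))

def VanF (η : ℝ) (f : ℝ → ℂ) : Prop :=
  ∀ x : ℝ, (∀ k : ℤ, η ≤ |x - 2 * Real.pi * (k : ℝ)|) → f x = 0

lemma exp_periodic (n : ℤ) :
    Function.Periodic (fun θ : ℝ => Complex.exp (-Complex.I * (n : ℂ) * (θ : ℂ)))
      (2 * Real.pi) := by
  intro x
  simp only
  rw [Complex.exp_eq_exp_iff_exists_int]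
  refine ⟨-n, ?_⟩
  push_cast
  ring

lemma coef_shift (f : ℝ → ℂ) (hp : Function.Periodic f (2 * Real.pi)) (s : ℝ) (n : ℤ) :
    coefF (fun x => f (x - s)) n
      = Complex.exp (-Complex.I * (n : ℂ) * (s : ℂ)) * coefF f n := by
  unfold coefF
  have h1 : ∀ θ : ℝ, f (θ - s) * Complex.exp (-Complex.I * (n : ℂ) * (θ : ℂ))
      = (fun y : ℝ => Complex.exp (-Complex.I * (n : ℂ) * (s : ℂ)) *
        (f y * Complex.exp (-Complex.I * (n : ℂ) * (y : ℂ)))) (θ - s) := by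
    intro θ
    have : Complex.exp (-Complex.I * (n : ℂ) * (θ : ℂ)) =
        Complex.exp (-Complex.I * (n : ℂ) * (s : ℂ)) *
        Complex.exp (-Complex.I * (n : ℂ) * ((θ - s : ℝ) : ℂ)) := by
      rw [← Complex.exp_add]; congr 1; push_cast; ring
    simp only
    rw [this]; ring
  simp_rw [h1]
  rw [intervalIntegral.integral_comp_sub_right
    (fun y : ℝ => Complex.exp (-Complex.I * (n : ℂ) * (s : ℂ)) *
        (f y * Complex.exp (-Complex.I * (n : ℂ) * (y : ℂ)))) s]
  rw [intervalIntegral.integral_const_mul]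
  congr 1
  have := (hp.mul (exp_periodic n)).intervalIntegral_add_eq (0 - s) 0
  simp only [Pi.mul_apply] at this
  rw [zero_add] at this
  rw [← this]
  congr 1
  ring

lemma cont_int (f : ℝ → ℂ) (hf : Continuous f) (n : ℤ) :
    IntervalIntegrable (fun θ : ℝ => f θ * Complex.exp (-Complex.I * (n : ℂ) * (θ : ℂ)))
      MeasureTheory.volume 0 (2 * Real.pi) := by
  apply Continuous.intervalIntegrable
  fun_prop

lemma coef_comb (f : ℝ → ℂ) (hf : Continuous f) (hp : Function.Periodic f (2 * Real.pi))
    (s : ℝ) (u v : ℂ) (n : ℤ) :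
    coefF (fun x => u * f x + v * f (x - s)) n
      = (u + v * Complex.exp (-Complex.I * (n : ℂ) * (s : ℂ))) * coefF f n := by
  have h2 := coef_shift f hp s n
  have : coefF (fun x => u * f x + v * f (x - s)) n
      = u * coefF f n + v * coefF (fun x => f (x - s)) n := by
    unfold coefF
    rw [← intervalIntegral.integral_const_mul, ← intervalIntegral.integral_const_mul,
      ← intervalIntegral.integral_add]
    · congr 1; ext θ; ring
    · exact (cont_int f hf n).const_mul u
    · exact (cont_int (fun x => f (x - s)) (by fun_prop) n).const_mul v
  rw [this, h2]; ring

lemma van_shift {η : ℝ} {f : ℝ → ℂ} (h : VanF η f) {s : ℝ} (hs : 0 ≤ s) (u v : ℂ) :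
    VanF (η + s) (fun x => u * f x + v * f (x - s)) := by
  intro x hx
  have h1 : f x = 0 := h x fun k => by linarith [hx k]
  have h2 : f (x - s) = 0 := h _ fun k => by
    have := hx k
    have h3 : |x - 2 * Real.pi * (k : ℝ)| ≤ |x - s - 2 * Real.pi * (k : ℝ)| + |s| := by
      have e : x - 2 * Real.pi * (k : ℝ) = (x - s - 2 * Real.pi * (k : ℝ)) + s := by ring
      rw [e]
      exact abs_add_le _ _
    rw [abs_of_nonneg hs] at h3
    linarith
  simp [h1, h2]

lemma van_mono {η η' : ℝ} {f : ℝ → ℂ} (h : VanF η f) (hh : η ≤ η') : VanF η' f :=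
  fun x hx => h x fun k => hh.trans (hx k)

lemma periodic_bounded (f : ℝ → ℂ) (hf : Continuous f)
    (hp : Function.Periodic f (2 * Real.pi)) : ∃ M, 0 ≤ M ∧ ∀ x, ‖f x‖ ≤ M := by
  obtain ⟨M, hM⟩ := (isCompact_Icc (a := (0 : ℝ)) (b := 2 * Real.pi)).exists_bound_of_continuousOn
    hf.continuousOn
  refine ⟨M, (norm_nonneg _).trans (hM 0 ⟨le_rfl, by positivity⟩), fun x => ?_⟩
  obtain ⟨y, hy, hxy⟩ := hp.exists_mem_Ico₀ (by positivity) x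
  rw [hxy]
  exact hM y ⟨hy.1, hy.2.le⟩

lemma exists_bump (η : ℝ) (hη : 0 < η) :
    ∃ f : ℝ → ℂ, ContDiff ℝ (⊤ : ℕ∞) f ∧ Function.Periodic f (2 * Real.pi) ∧
      VanF η f ∧ coefF f 0 ≠ 0 := by
  wlog hη1 : η ≤ 1 generalizing η
  · obtain ⟨f, h1, h2, h3, h4⟩ := this 1 one_pos le_rfl
    exact ⟨f, h1, h2, van_mono h3 (by linarith), h4⟩
  have hpi := Real.pi_gt_three
  let r : ℝ → ℝ := fun x => Real.smoothTransition (Real.cos x - Real.cos η)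
  have hr : ContDiff ℝ (⊤ : ℕ∞) r :=
    Real.smoothTransition.contDiff.comp (Real.contDiff_cos.sub contDiff_const)
  refine ⟨fun x => (r x : ℂ), Complex.ofRealCLM.contDiff.comp hr, ?_, ?_, ?_⟩
  · intro x; simp [r]
  · intro x hx
    have hk := hx (toIocDiv Real.two_pi_pos (-Real.pi) x)
    have hmem := sub_toIocDiv_zsmul_mem_Ioc Real.two_pi_pos (-Real.pi) x
    set k := toIocDiv Real.two_pi_pos (-Real.pi) x
    rw [zsmul_eq_mul] at hmem
    have e : x - 2 * Real.pi * (k : ℝ) = x - k * (2 * Real.pi) := by ring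
    rw [e] at hk
    have hc : Real.cos x ≤ Real.cos η := by
      have : Real.cos x = Real.cos |x - k * (2 * Real.pi)| := by
        rw [Real.cos_abs, Real.cos_sub_int_mul_two_pi]
      rw [this]
      apply Real.cos_le_cos_of_nonneg_of_le_pi hη.le _ hk
      rw [abs_le]; constructor <;> linarith [hmem.1, hmem.2]
    have : r x = 0 := Real.smoothTransition.zero_of_nonpos (by linarith)
    simp [this]
  · have h0 : 0 < ∫ x in (0 : ℝ)..(2 * Real.pi), r x := by
      apply intervalIntegral.integral_pos (by positivity) hr.continuous.continuousOn
      · intro x _; exact Real.smoothTransition.nonneg _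
      · refine ⟨0, ⟨le_rfl, by positivity⟩, ?_⟩
        apply Real.smoothTransition.pos_of_pos
        have := Real.cos_lt_cos_of_nonneg_of_le_pi le_rfl (by linarith : η ≤ Real.pi) hη
        linarith
    have : coefF (fun x => (r x : ℂ)) 0 = ((∫ x in (0 : ℝ)..(2 * Real.pi), r x : ℝ) : ℂ) := by
      unfold coefF
      rw [← intervalIntegral.integral_ofReal]
      simp
    rw [this]
    exact_mod_cast h0.ne'

lemma finite_phase (F : Finset ℤ) (hF : (0 : ℤ) ∉ F) : ∀ (η : ℝ), 0 < η →
    ∃ f : ℝ → ℂ, ContDiff ℝ (⊤ : ℕ∞) f ∧ Function.Periodic f (2 * Real.pi) ∧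
      VanF η f ∧ coefF f 0 ≠ 0 ∧ ∀ n ∈ F, coefF f n = 0 := by
  induction F using Finset.induction_on with
  | empty =>
    intro η hη
    obtain ⟨f, h1, h2, h3, h4⟩ := exists_bump η hη
    exact ⟨f, h1, h2, h3, h4, by simp⟩
  | insert b F hb ih =>
    intro η hη
    have hb0 : b ≠ 0 := fun h => hF (by simp [h])
    obtain ⟨f, h1, h2, h3, h4, h5⟩ := ih (fun h => hF (by simp [h])) (η / 2) (by positivity)
    have hbpos : 0 < |(b : ℝ)| := by positivity
    obtain ⟨s, hs0, hs1, hs2⟩ : ∃ s : ℝ, 0 < s ∧ s ≤ η / 2 ∧ s ≤ 1 / |(b : ℝ)| :=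
      ⟨min (η / 2) (1 / |(b : ℝ)|), by positivity, min_le_left _ _, min_le_right _ _⟩
    have key : ∀ n, coefF (fun x => 1 * f x +
        (-Complex.exp (Complex.I * (b : ℂ) * (s : ℂ))) * f (x - s)) n = _ :=
      coef_comb f h1.continuous h2 s 1 (-Complex.exp (Complex.I * (b : ℂ) * (s : ℂ)))
    refine ⟨fun x => 1 * f x + (-Complex.exp (Complex.I * (b : ℂ) * (s : ℂ))) * f (x - s),
      ?_, ?_, ?_, ?_, ?_⟩
    · exact (contDiff_const.mul h1).add (contDiff_const.mul (h1.comp (contDiff_id.sub contDiff_const)))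
    · intro x
      have e : x + 2 * Real.pi - s = (x - s) + 2 * Real.pi := by ring
      simp only [e, h2 x, h2 (x - s)]
    · exact van_mono (van_shift h3 hs0.le _ _) (by linarith)
    · rw [key]
      refine mul_ne_zero ?_ h4
      intro h
      have h' : Complex.exp (Complex.I * (b : ℂ) * (s : ℂ)) = 1 := by
        simp at h
        linear_combination -h
      rw [Complex.exp_eq_one_iff] at h'
      obtain ⟨k, hk⟩ := h'
      have hk2 : (b : ℝ) * s = k * (2 * Real.pi) := by
        have : ((b : ℝ) * s : ℂ) = (k * (2 * Real.pi) : ℂ) := by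
          apply mul_left_cancel₀ Complex.I_ne_zero
          push_cast
          linear_combination hk
        exact_mod_cast this
      have hbs : |(b : ℝ) * s| ≤ 1 := by
        rw [abs_mul, abs_of_pos hs0]
        rw [le_div_iff₀ hbpos] at hs2
        linarith
      have hk0 : k ≠ 0 := by
        rintro rfl
        simp at hk2
        exact hk2.elim (fun h => hb0 h) (fun h => hs0.ne' h)
      rw [hk2, abs_mul, abs_of_pos Real.two_pi_pos] at hbs
      have : (1 : ℝ) ≤ |(k : ℝ)| := by exact_mod_cast Int.one_le_abs hk0
      nlinarith [Real.pi_gt_three]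
    · intro n hn
      rw [key]
      rcases Finset.mem_insert.1 hn with rfl | hn
      · rw [neg_mul, ← Complex.exp_add]
        have : Complex.I * (n : ℂ) * s + -Complex.I * n * s = 0 := by ring
        rw [this]; simp
      · rw [h5 n hn, mul_zero]

noncomputable def gseq (h : ℝ → ℂ) (s : ℕ → ℝ) : ℕ → ℝ → ℂ
  | 0 => h
  | k + 1 => fun x => (1 / 2 : ℂ) * gseq h s k x + (1 / 2 : ℂ) * gseq h s k (x - s k)

lemma gseq_contDiff {h : ℝ → ℂ} (s : ℕ → ℝ) (hh : ContDiff ℝ (⊤ : ℕ∞) h) (k : ℕ) :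
    ContDiff ℝ (⊤ : ℕ∞) (gseq h s k) := by
  induction k with
  | zero => exact hh
  | succ k ih =>
    exact (contDiff_const.mul ih).add (contDiff_const.mul (ih.comp (contDiff_id.sub contDiff_const)))

lemma gseq_periodic {h : ℝ → ℂ} (s : ℕ → ℝ) (hh : Function.Periodic h (2 * Real.pi)) (k : ℕ) :
    Function.Periodic (gseq h s k) (2 * Real.pi) := by
  induction k with
  | zero => exact hh
  | succ k ih =>
    intro x
    have e : x + 2 * Real.pi - s k = (x - s k) + 2 * Real.pi := by ring
    simp only [gseq, e, ih x, ih (x - s k)]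

lemma gseq_van {h : ℝ → ℂ} {s : ℕ → ℝ} (hs : ∀ k, 0 ≤ s k) {η : ℝ} (hh : VanF η h) (k : ℕ) :
    VanF (η + ∑ i ∈ Finset.range k, s i) (gseq h s k) := by
  induction k with
  | zero => simpa [gseq] using hh
  | succ k ih =>
    rw [Finset.sum_range_succ, ← add_assoc]
    exact van_shift ih (hs k) _ _

lemma gseq_iteratedDeriv {h : ℝ → ℂ} (s : ℕ → ℝ) (hh : ContDiff ℝ (⊤ : ℕ∞) h) (m k : ℕ) :
    iteratedDeriv m (gseq h s k) = gseq (iteratedDeriv m h) s k := by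
  induction k with
  | zero => rfl
  | succ k ih =>
    have hc := gseq_contDiff s hh k
    have hc' : ContDiff ℝ m (gseq h s k) := hc.of_le (by exact_mod_cast le_top)
    have hc2 : ContDiff ℝ m (fun x => gseq h s k (x - s k)) :=
      hc'.comp (contDiff_id.sub contDiff_const)
    ext x
    simp only [gseq]
    rw [← ih]
    rw [iteratedDeriv_fun_add (contDiff_const.mul hc').contDiffAt (contDiff_const.mul hc2).contDiffAt,
      iteratedDeriv_const_mul _ hc'.contDiffAt, iteratedDeriv_const_mul _ hc2.contDiffAt,
      iteratedDeriv_comp_sub_const]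

lemma gseq_bound {h : ℝ → ℂ} (s : ℕ → ℝ) {M : ℝ} (hM : ∀ x, ‖h x‖ ≤ M) (k : ℕ) :
    ∀ x, ‖gseq h s k x‖ ≤ M := by
  induction k with
  | zero => exact hM
  | succ k ih =>
    intro x
    simp only [gseq]
    refine (norm_add_le _ _).trans ?_
    rw [norm_mul, norm_mul]
    have : ‖(1 / 2 : ℂ)‖ = 1 / 2 := by norm_num
    rw [this]
    linarith [ih x, ih (x - s k)]

lemma iteratedDeriv_periodic {h : ℝ → ℂ} (hp : Function.Periodic h (2 * Real.pi)) (m : ℕ) :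
    Function.Periodic (iteratedDeriv m h) (2 * Real.pi) := by
  intro x
  have := iteratedDeriv_comp_add_const m h (2 * Real.pi)
  have h2 : (fun z => h (z + 2 * Real.pi)) = h := funext hp
  rw [h2] at this
  exact (congrFun this x).symm

lemma gseq_diff_bound {h : ℝ → ℂ} {s : ℕ → ℝ} (hs : ∀ k, 0 ≤ s k) (hh : ContDiff ℝ (⊤ : ℕ∞) h)
    {m : ℕ} {M : ℝ} (hM : ∀ x, ‖iteratedDeriv (m + 1) h x‖ ≤ M) (k : ℕ) (x : ℝ) :
    ‖iteratedDeriv m (gseq h s (k + 1)) x - iteratedDeriv m (gseq h s k) x‖ ≤ M * s k := by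
  have e : iteratedDeriv m (gseq h s (k + 1)) x - iteratedDeriv m (gseq h s k) x
      = (1 / 2 : ℂ) * (iteratedDeriv m (gseq h s k) (x - s k) - iteratedDeriv m (gseq h s k) x) := by
    rw [gseq_iteratedDeriv s hh m (k + 1), gseq_iteratedDeriv s hh m k]
    simp only [gseq]; ring
  have hc := gseq_contDiff s hh k
  have hd : Differentiable ℝ (iteratedDeriv m (gseq h s k)) :=
    hc.differentiable_iteratedDeriv m (by exact_mod_cast WithTop.coe_lt_top (m : ℕ))
  have := Convex.norm_image_sub_le_of_norm_deriv_le (f := iteratedDeriv m (gseq h s k))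
    (C := M) (s := Set.univ) (x := x) (y := x - s k) (fun y _ => hd y)
    (fun y _ => by
      rw [← iteratedDeriv_succ, gseq_iteratedDeriv s hh]
      exact gseq_bound s hM k y) convex_univ trivial trivial
  rw [e, norm_mul]
  have h12 : ‖(1 / 2 : ℂ)‖ = 1 / 2 := by norm_num
  have h3 : ‖x - s k - x‖ = s k := by
    rw [show x - s k - x = - s k by ring, norm_neg, Real.norm_of_nonneg (hs k)]
  rw [h3] at this
  rw [h12]
  have h4 := norm_nonneg (iteratedDeriv m (gseq h s k) (x - s k) - iteratedDeriv m (gseq h s k) x)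
  linarith

lemma tail_phase {h : ℝ → ℂ} {s : ℕ → ℝ} (hs : ∀ k, 0 ≤ s k) (hsum : Summable s)
    {η η' : ℝ} (hη : ∑' k, s k ≤ η') (hh : ContDiff ℝ (⊤ : ℕ∞) h)
    (hp : Function.Periodic h (2 * Real.pi)) (hv : VanF η h) :
    ∃ f : ℝ → ℂ, ContDiff ℝ (⊤ : ℕ∞) f ∧ Function.Periodic f (2 * Real.pi) ∧
      VanF (η + η') f ∧ coefF f 0 = coefF h 0 ∧ (∀ n, coefF h n = 0 → coefF f n = 0) ∧
      ∀ (n : ℤ) (k : ℕ), Complex.exp (-Complex.I * (n : ℂ) * (s k : ℂ)) = -1 → coefF f n = 0 := by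
  have hbd : ∀ m, ∃ M, 0 ≤ M ∧ ∀ x, ‖iteratedDeriv m h x‖ ≤ M := fun m =>
    periodic_bounded _ (hh.continuous_iteratedDeriv m (by exact_mod_cast le_top))
      (iteratedDeriv_periodic hp m)
  choose M hM0 hM using hbd
  have hdiff : ∀ (m k : ℕ) (x : ℝ), ‖iteratedFDeriv ℝ m
      (fun x => gseq h s (k + 1) x - gseq h s k x) x‖ ≤ M (m + 1) * s k := by
    intro m k x
    rw [norm_iteratedFDeriv_eq_norm_iteratedDeriv, iteratedDeriv_fun_sub]
    · exact gseq_diff_bound hs hh (hM (m + 1)) k x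
    · exact ((gseq_contDiff s hh _).of_le (by exact_mod_cast le_top)).contDiffAt
    · exact ((gseq_contDiff s hh _).of_le (by exact_mod_cast le_top)).contDiffAt
  let f : ℝ → ℂ := fun x => h x + ∑' k, (gseq h s (k + 1) x - gseq h s k x)
  have hf : ContDiff ℝ (⊤ : ℕ∞) f := by
    refine hh.add ?_
    refine contDiff_tsum (v := fun m k => M (m + 1) * s k)
      (fun k => (gseq_contDiff s hh _).sub (gseq_contDiff s hh _))
      (fun m _ => hsum.mul_left _) (fun m k x _ => hdiff m k x)
  have hlim : ∀ x, Filter.Tendsto (fun k => gseq h s k x) Filter.atTop (nhds (f x)) := by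
    intro x
    have hS : Summable fun k => gseq h s (k + 1) x - gseq h s k x := by
      refine Summable.of_norm_bounded (hsum.mul_left (M 1)) fun k => ?_
      simpa using hdiff 0 k x
    have := (hS.hasSum.tendsto_sum_nat).const_add (h x)
    refine this.congr fun k => ?_
    rw [Finset.sum_range_sub (fun k => gseq h s k x)]
    simp [gseq]
  have hcoef : ∀ n, Filter.Tendsto (fun k => coefF (gseq h s k) n) Filter.atTop
      (nhds (coefF f n)) := by
    intro n
    unfold coefF
    refine intervalIntegral.tendsto_integral_filter_of_dominated_convergence (fun _ => M 0)
      (Filter.Eventually.of_forall fun k => ?_) (Filter.Eventually.of_forall fun k => ?_) ?_ ?_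
    · apply Continuous.aestronglyMeasurable
      have := (gseq_contDiff s hh k).continuous
      fun_prop
    · refine Filter.Eventually.of_forall fun x _ => ?_
      rw [norm_mul]
      have : ‖Complex.exp (-Complex.I * (n : ℂ) * (x : ℂ))‖ = 1 := by
        rw [show -Complex.I * (n : ℂ) * (x : ℂ) = ((-(n * x) : ℝ) : ℂ) * Complex.I by
          push_cast; ring]
        exact Complex.norm_exp_ofReal_mul_I _
      rw [this, mul_one]
      exact gseq_bound s (by simpa using hM 0) k x
    · exact intervalIntegrable_const
    · exact Filter.Eventually.of_forall fun x _ => (hlim x).mul_const _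
  have hstep : ∀ k n, coefF (gseq h s (k + 1)) n =
      ((1 / 2 : ℂ) + 1 / 2 * Complex.exp (-Complex.I * (n : ℂ) * (s k : ℂ))) * coefF (gseq h s k) n :=
    fun k n => coef_comb _ (gseq_contDiff s hh k).continuous (gseq_periodic s hp k) (s k) _ _ n
  have hzero : ∀ n k, coefF (gseq h s k) n = 0 → coefF f n = 0 := by
    intro n k hk
    have : ∀ j, k ≤ j → coefF (gseq h s j) n = 0 := by
      intro j hj
      induction j, hj using Nat.le_induction with
      | base => exact hk
      | succ j _ ih => rw [hstep, ih, mul_zero]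
    refine tendsto_nhds_unique (hcoef n) (tendsto_const_nhds.congr' ?_)
    filter_upwards [Filter.eventually_ge_atTop k] with j hj using (this j hj).symm
  refine ⟨f, hf, ?_, ?_, ?_, ?_, ?_⟩
  · intro x
    have h2 := hlim (x + 2 * Real.pi)
    simp only [gseq_periodic s hp _ x] at h2
    exact tendsto_nhds_unique h2 (hlim x)
  · intro x hx
    refine tendsto_nhds_unique (hlim x) (tendsto_const_nhds.congr fun k => ?_)
    refine (gseq_van hs hv k x fun j => ?_).symm
    have := hsum.sum_le_tsum (Finset.range k) (fun i _ => hs i)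
    linarith [hx j]
  · have : ∀ k, coefF (gseq h s k) 0 = coefF h 0 := by
      intro k
      induction k with
      | zero => rfl
      | succ k ih => rw [hstep, ih]; norm_num
    refine tendsto_nhds_unique (hcoef 0) (tendsto_const_nhds.congr fun k => (this k).symm)
  · intro n hn
    exact hzero n 0 hn
  · intro n k hk
    apply hzero n (k + 1)
    rw [hstep, hk]; norm_num


open Classical in
lemma summable_count (α C : ℝ) (hα0 : 0 ≤ α) (hα1 : α < 1) (hC : 0 < C)
    (B : Set ℤ)
    (hcount : ∀ T : ℝ, 1 ≤ T →
      (({n : ℤ | n ∈ B ∧ |(n : ℝ)| ≤ T}).ncard : ℝ) ≤ C * T ^ α) :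
    Summable (fun n : ℤ => if n ∈ B then 1 / (1 + |(n : ℝ)|) else 0) := by
  let r : ℝ := 2 ^ (α - 1)
  have hr0 : 0 < r := by positivity
  have hr1 : r < 1 := Real.rpow_lt_one_of_one_lt_of_neg (by norm_num) (by linarith)
  have hg : Summable fun j : ℕ => C * 2 ^ α * r ^ j :=
    (summable_geometric_of_lt_one hr0.le hr1).mul_left _
  refine summable_of_sum_le (c := ∑' j : ℕ, C * 2 ^ α * r ^ j) (fun n => ?_) (fun u => ?_)
  · simp only [Pi.zero_apply]; split_ifs <;> positivity
  rw [← Finset.sum_filter]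
  set v := u.filter (· ∈ B) with hv
  let l : ℤ → ℕ := fun n => Nat.log 2 (1 + n.natAbs)
  rw [← Finset.sum_fiberwise_of_maps_to (t := v.image l) (g := l)
    (fun i hi => Finset.mem_image_of_mem l hi)]
  refine le_trans (Finset.sum_le_sum fun j _ => ?_) (hg.sum_le_tsum _ (fun _ _ => by positivity))
  have hn : ∀ n ∈ v.filter (fun i => l i = j), (2 : ℝ) ^ j ≤ 1 + |(n : ℝ)| ∧
      1 + |(n : ℝ)| < 2 ^ (j + 1) := by
    intro n hn
    have hl : Nat.log 2 (1 + n.natAbs) = j := (Finset.mem_filter.1 hn).2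
    have h1 := Nat.pow_log_le_self 2 (x := 1 + n.natAbs) (by omega)
    have h2 := Nat.lt_pow_succ_log_self (b := 2) (by norm_num) (1 + n.natAbs)
    rw [hl] at h1 h2
    have e : |(n : ℝ)| = (n.natAbs : ℝ) := by rw [Nat.cast_natAbs]; simp
    rw [e]
    constructor <;> exact_mod_cast by assumption
  have hcard : ((v.filter (fun i => l i = j)).card : ℝ) ≤ C * ((2 : ℝ) ^ (j + 1)) ^ α := by
    refine le_trans ?_ (hcount (2 ^ (j + 1)) (one_le_pow₀ (by norm_num)))
    rw [← Set.ncard_coe_finset]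
    refine Nat.cast_le.2 ?_
    apply Set.ncard_le_ncard
    · intro n hnn
      refine ⟨?_, ?_⟩
      · have := (Finset.mem_filter.1 (Finset.mem_coe.1 hnn)).1
        exact (Finset.mem_filter.1 this).2
      · have := (hn n hnn).2
        push_cast at *
        linarith
    · apply (Set.finite_Icc (-(2 ^ (j + 1) : ℤ)) (2 ^ (j + 1))).subset
      rintro n ⟨_, hb⟩
      rw [abs_le] at hb
      push_cast at hb
      exact ⟨by exact_mod_cast hb.1, by exact_mod_cast hb.2⟩
  calc ∑ i ∈ v.filter (fun i => l i = j), 1 / (1 + |(i : ℝ)|)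
      ≤ ∑ i ∈ v.filter (fun i => l i = j), 1 / (2 : ℝ) ^ j := by
        refine Finset.sum_le_sum fun i hi => ?_
        exact one_div_le_one_div_of_le (by positivity) (hn i hi).1
    _ = ((v.filter (fun i => l i = j)).card : ℝ) * (1 / 2 ^ j) := by
        rw [Finset.sum_const, nsmul_eq_mul]
    _ ≤ C * ((2 : ℝ) ^ (j + 1)) ^ α * (1 / 2 ^ j) := by gcongr
    _ = C * 2 ^ α * r ^ j := by
        have : r = 2 ^ α / 2 := by
          simp only [r]; rw [Real.rpow_sub (by norm_num), Real.rpow_one]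
        rw [this, pow_succ, Real.mul_rpow (by positivity) (by norm_num), div_pow,
          ← Real.rpow_natCast, ← Real.rpow_natCast, ← Real.rpow_mul (by norm_num),
          ← Real.rpow_mul (by norm_num), mul_comm α]
        ring

open Classical in
lemma exists_notMem (B : Set ℤ)
    (h : Summable (fun n : ℤ => if n ∈ B then 1 / (1 + |(n : ℝ)|) else 0)) : ∃ m, m ∉ B := by
  by_contra! hB
  simp only [hB, if_true] at h
  have h2 := h.comp_injective (i := fun n : ℕ => (n : ℤ)) Nat.cast_injective
  have h3 : Summable (fun n : ℕ => 1 / ((n + 1 : ℕ) : ℝ)) := by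
    refine h2.congr fun n => ?_
    simp [add_comm]
  rw [summable_nat_add_iff (f := fun n : ℕ => 1 / (n : ℝ)) 1] at h3
  exact Real.not_summable_one_div_natCast h3

open Classical in
lemma summable_shift (B : Set ℤ) (m : ℤ) (hm : m ∉ B)
    (h : Summable (fun n : ℤ => if n ∈ B then 1 / (1 + |(n : ℝ)|) else 0)) :
    Summable (fun n : ℤ => if n + m ∈ B then Real.pi / |(n : ℝ)| else 0) := by
  have h2 := ((Equiv.addRight m).summable_iff.2 h).mul_left (Real.pi * (2 + |(m : ℝ)|))
  refine Summable.of_nonneg_of_le (fun n => ?_) (fun n => ?_) h2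
  · split_ifs <;> positivity
  · simp only [Function.comp_apply, Equiv.coe_addRight]
    split_ifs with hn
    · have hn0 : n ≠ 0 := by rintro rfl; simp at hn; exact hm hn
      have h1 : (1 : ℝ) ≤ |(n : ℝ)| := by exact_mod_cast Int.one_le_abs hn0
      have h3 : |((n + m : ℤ) : ℝ)| ≤ |(n : ℝ)| + |(m : ℝ)| := by
        push_cast; exact abs_add_le _ _
      rw [mul_one_div, div_le_div_iff₀ (by positivity) (by positivity), mul_assoc]
      apply mul_le_mul_of_nonneg_left _ Real.pi_pos.le
      nlinarith [abs_nonneg (m : ℝ)]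
    · simp

/-- If `B ⊆ ℤ` has counting function at most `C·T^α` with `0 ≤ α < 1`, then for every
`δ > 0` and `θ₀ ∈ ℝ` there is a smooth `2π`-periodic function `f : ℝ → ℂ` with
`f(θ₀) = 1`, vanishing at every point at distance at least `δ` from `θ₀ + 2πℤ`,
all of whose Fourier coefficients indexed by `B` vanish. -/
theorem exists_smooth_periodic_fourier_vanishing
    (α C : ℝ) (hα0 : 0 ≤ α) (hα1 : α < 1) (hC : 0 < C)
    (B : Set ℤ)
    (hcount : ∀ T : ℝ, 1 ≤ T →
      (({n : ℤ | n ∈ B ∧ |(n : ℝ)| ≤ T}).ncard : ℝ) ≤ C * T ^ α)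
    (δ : ℝ) (hδ : 0 < δ) (θ₀ : ℝ) :
    ∃ f : ℝ → ℂ,
      ContDiff ℝ (⊤ : ℕ∞) f ∧
      Function.Periodic f (2 * Real.pi) ∧
      f θ₀ = 1 ∧
      (∀ θ : ℝ, (∀ k : ℤ, δ ≤ |θ - θ₀ - 2 * Real.pi * (k : ℝ)|) → f θ = 0) ∧
      (∀ n : ℤ, n ∈ B →
        ∫ θ in (0 : ℝ)..(2 * Real.pi),
          f θ * Complex.exp (-Complex.I * (n : ℂ) * (θ : ℂ)) = 0) := by
  classical
  have hS := summable_count α C hα0 hα1 hC B hcount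
  obtain ⟨m, hm⟩ := exists_notMem B hS
  have hS2 := summable_shift B m hm hS
  obtain ⟨e⟩ : Nonempty (ℕ ≃ ℤ) := ⟨Equiv.intEquivNat.symm⟩
  let s : ℕ → ℝ := fun k => if e k + m ∈ B then Real.pi / |((e k : ℤ) : ℝ)| else 0
  have hs0 : ∀ k, 0 ≤ s k := fun k => by
    simp only [s]; split_ifs <;> positivity
  have hs : Summable s := e.summable_iff.2 hS2
  obtain ⟨K, hK⟩ : ∃ K : ℕ, ∑' k, s (k + K) < δ / 4 :=
    ((tendsto_sum_nat_add s).eventually_lt_const (by positivity)).exists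
  let F : Finset ℤ := ((Finset.range K).image e).filter (· + m ∈ B)
  have hF : (0 : ℤ) ∉ F := by
    intro h
    have := (Finset.mem_filter.1 h).2
    rw [zero_add] at this
    exact hm this
  obtain ⟨h, h1, h2, h3, h4, h5⟩ := finite_phase F hF (δ / 4) (by positivity)
  obtain ⟨g, g1, g2, g3, g4, g5, g6⟩ := tail_phase (s := fun k => s (k + K)) (fun k => hs0 _)
    ((summable_nat_add_iff K).2 hs) hK.le h1 h2 h3
  have g3' : VanF (δ / 2) g := van_mono g3 (by linarith)
  have gB : ∀ n, n + m ∈ B → coefF g n = 0 := by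
    intro n hn
    obtain ⟨k, rfl⟩ := e.surjective n
    by_cases hk : k < K
    · apply g5
      apply h5
      exact Finset.mem_filter.2 ⟨Finset.mem_image_of_mem _ (Finset.mem_range.2 hk), hn⟩
    · apply g6 _ (k - K)
      have hkk : k - K + K = k := by omega
      simp only [hkk, s, if_pos hn]
      have hn0 : e k ≠ 0 := by
        intro h0
        rw [h0, zero_add] at hn
        exact hm hn
      have hr : ((e k : ℤ) : ℝ) ≠ 0 := by exact_mod_cast hn0
      have hc : ((e k : ℤ) : ℂ) ≠ 0 := by exact_mod_cast hn0
      rcases lt_or_gt_of_ne hr with hneg | hpos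
      · rw [abs_of_neg hneg]
        have : -Complex.I * ((e k : ℤ) : ℂ) * ((Real.pi / -((e k : ℤ) : ℝ) : ℝ) : ℂ)
            = Real.pi * Complex.I := by
          push_cast; field_simp
        rw [this, Complex.exp_pi_mul_I]
      · rw [abs_of_pos hpos]
        have : -Complex.I * ((e k : ℤ) : ℂ) * ((Real.pi / ((e k : ℤ) : ℝ) : ℝ) : ℂ)
            = -(Real.pi * Complex.I) := by
          push_cast; field_simp
        rw [this, Complex.exp_neg, Complex.exp_pi_mul_I]; norm_num
  obtain ⟨x₁, hx₁⟩ : ∃ x, g x ≠ 0 := by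
    by_contra! hg
    apply h4
    rw [← g4]
    simp [coefF, hg]
  obtain ⟨k₁, hk₁⟩ : ∃ k : ℤ, |x₁ - 2 * Real.pi * (k : ℝ)| < δ / 2 := by
    by_contra! hc
    exact hx₁ (g3' x₁ hc)
  let E : ℝ → ℂ := fun θ => Complex.exp (-Complex.I * ((-m : ℤ) : ℂ) * (θ : ℂ))
  have hE0 : E θ₀ ≠ 0 := Complex.exp_ne_zero _
  let c : ℂ := (g x₁ * E θ₀)⁻¹
  let f : ℝ → ℂ := fun θ => c * (g (θ - (θ₀ - x₁)) * E θ)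
  refine ⟨f, ?_, ?_, ?_, ?_, ?_⟩
  · have hE : ContDiff ℝ (⊤ : ℕ∞) E :=
      Complex.contDiff_exp.comp (contDiff_const.mul Complex.ofRealCLM.contDiff)
    exact contDiff_const.mul ((g1.comp (contDiff_id.sub contDiff_const)).mul hE)
  · intro x
    have e1 : x + 2 * Real.pi - (θ₀ - x₁) = (x - (θ₀ - x₁)) + 2 * Real.pi := by ring
    have e2 : E (x + 2 * Real.pi) = E x := exp_periodic (-m) x
    simp only [f, e1, e2, g2 (x - (θ₀ - x₁))]
  · simp only [f, c]
    rw [show θ₀ - (θ₀ - x₁) = x₁ by ring]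
    exact inv_mul_cancel₀ (mul_ne_zero hx₁ hE0)
  · intro θ hθ
    have : g (θ - (θ₀ - x₁)) = 0 := by
      refine g3' _ fun k => ?_
      have h6 := hθ (k - k₁)
      push_cast at h6
      have e3 : θ - θ₀ - 2 * Real.pi * ((k : ℝ) - k₁) =
        (θ - (θ₀ - x₁) - 2 * Real.pi * k) - (x₁ - 2 * Real.pi * k₁) := by ring
      rw [e3] at h6
      have h7 := abs_sub (θ - (θ₀ - x₁) - 2 * Real.pi * k) (x₁ - 2 * Real.pi * k₁)
      linarith
    simp [f, this]
  · intro n hn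
    have h8 : coefF (fun x => g (x - (θ₀ - x₁))) (n - m) = 0 := by
      rw [coef_shift g g2, gB (n - m) (by simpa using hn), mul_zero]
    have h9 : ∀ θ : ℝ, f θ * Complex.exp (-Complex.I * (n : ℂ) * (θ : ℂ)) =
        c * (g (θ - (θ₀ - x₁)) *
          Complex.exp (-Complex.I * ((n - m : ℤ) : ℂ) * (θ : ℂ))) := by
      intro θ
      have : Complex.exp (-Complex.I * ((n - m : ℤ) : ℂ) * (θ : ℂ)) =
          E θ * Complex.exp (-Complex.I * (n : ℂ) * (θ : ℂ)) := by
        simp only [E]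
        rw [← Complex.exp_add]; congr 1; push_cast; ring
      rw [this]
      simp only [f]; ring
    simp_rw [h9]
    rw [intervalIntegral.integral_const_mul]
    unfold coefF at h8
    rw [h8, mul_zero]
end
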